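/- For every L > 0 there exist constants c₁ > 0 and c₂ > 0, depending only on L, with the following property: for every ε ∈ (0,1], every K > 0, and every strictly positive L-periodic u ∈ C³(ℝ) with u(x) ≤ K for all x, setting ū := (1/L)∫₀^L u dx, a := ū²/√(ε + K²), J := (1/2)∫₀^L (u')² dx, I := ∫₀^L f_ε(u)(u''')² dx, and D := ∫₀^L (u'')² dx, one has c₁ a² J ≤ I + c₂ √ε · a · D. -/

import Mathlib

open MeasureTheory intervalIntegral

lemma le_sq_aux {a b : ℝ} (hb : 0 ≤ b) (h : a ^ 2 ≤ b ^ 2) : a ≤ b :=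
  le_of_abs_le (abs_le_of_sq_le_sq h hb)

lemma cs_aux (a b : ℝ) (hab : a ≤ b) (f g : ℝ → ℝ) (hf : Continuous f) (hg : Continuous g) :
    (∫ x in a..b, f x * g x) ^ 2 ≤ (∫ x in a..b, f x ^ 2) * ∫ x in a..b, g x ^ 2 := by
  have key : ∀ t : ℝ, 0 ≤ (∫ x in a..b, f x ^ 2) * (t * t) + (2 * ∫ x in a..b, f x * g x) * t
      + ∫ x in a..b, g x ^ 2 := by
    intro t
    have h1 : 0 ≤ ∫ x in a..b, (f x * t + g x) ^ 2 :=
      intervalIntegral.integral_nonneg hab (fun x _ => sq_nonneg _)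
    have h2 : ∫ x in a..b, (f x * t + g x) ^ 2 = (∫ x in a..b, f x ^ 2) * (t * t)
        + (2 * ∫ x in a..b, f x * g x) * t + ∫ x in a..b, g x ^ 2 := by
      rw [← intervalIntegral.integral_mul_const, ← intervalIntegral.integral_const_mul,
        ← intervalIntegral.integral_mul_const, ← intervalIntegral.integral_add,
        ← intervalIntegral.integral_add]
      · congr 1; ext x; ring
      all_goals exact Continuous.intervalIntegrable (by fun_prop) _ _
    rwa [h2] at h1
  have := discrim_le_zero key
  unfold discrim at this
  nlinarith

lemma per_int_zero (L : ℝ) (F F' : ℝ → ℝ) (hF : Function.Periodic F L)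
    (hd : ∀ x, HasDerivAt F (F' x) x) (hc : Continuous F') : ∫ x in (0:ℝ)..L, F' x = 0 := by
  rw [intervalIntegral.integral_eq_sub_of_hasDerivAt (fun x _ => hd x) (hc.intervalIntegrable _ _)]
  have := hF 0
  rw [zero_add] at this
  rw [this, sub_self]

/-- Bernis type estimate. -/
lemma part1 (L e : ℝ) (hL : 0 < L) (he : 0 < e) (u u1 u2 u3 : ℝ → ℝ)
    (c0 : Continuous u) (c1 : Continuous u1) (c2 : Continuous u2) (c3 : Continuous u3)
    (d0 : ∀ x, HasDerivAt u (u1 x) x) (d1 : ∀ x, HasDerivAt u1 (u2 x) x)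
    (d2 : ∀ x, HasDerivAt u2 (u3 x) x)
    (p0 : Function.Periodic u L) (p1 : Function.Periodic u1 L) (p2 : Function.Periodic u2 L)
    (pos : ∀ x, 0 < u x) :
    ∃ T : ℝ, T ^ 2 ≤ (∫ x in (0:ℝ)..L, (u x ^ 4 / (e ^ 2 + u x ^ 2)) * (u3 x) ^ 2)
        * (∫ x in (0:ℝ)..L, u1 x ^ 2) ∧
      ∫ x in (0:ℝ)..L, u x * u2 x ^ 2 ≤ T + 4 * e * ∫ x in (0:ℝ)..L, u2 x ^ 2 := by
  have hne : ∀ x, e + u x ≠ 0 := fun x => by have := pos x; positivity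
  have hne2 : ∀ x, e ^ 2 + u x ^ 2 ≠ 0 := fun x => by have := pos x; positivity
  set w : ℝ → ℝ := fun x => e / (e + u x) with hw
  set g : ℝ → ℝ := fun x => u x ^ 2 / (e + u x) with hg
  have cw : Continuous w := continuous_const.div (by fun_prop) hne
  have cg : Continuous g := (by fun_prop : Continuous fun x => u x ^ 2).div (by fun_prop) hne
  have cf : Continuous fun x => u x ^ 4 / (e ^ 2 + u x ^ 2) :=
    (by fun_prop : Continuous fun x => u x ^ 4).div (by fun_prop) hne2
  have w0 : ∀ x, 0 ≤ w x := fun x => by have := pos x; simp only [hw]; positivity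
  have w1 : ∀ x, w x ≤ 1 := fun x => by
    have := pos x
    simp only [hw]; rw [div_le_one (by positivity)]; linarith
  have dw : ∀ x, HasDerivAt w (-(w x ^ 2 * u1 x / e)) x := fun x => by
    have := (hasDerivAt_const x e).div ((d0 x).const_add e) (hne x)
    refine HasDerivAt.congr_deriv this ?_
    have := hne x
    simp only [hw]; field_simp; ring
  have dg : ∀ x, HasDerivAt g ((1 - w x ^ 2) * u1 x) x := fun x => by
    have := ((d0 x).pow 2).div ((d0 x).const_add e) (hne x)
    refine HasDerivAt.congr_deriv this ?_
    have := hne x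
    simp only [hw]; field_simp; simp; left; ring
  have pw : Function.Periodic w L := fun x => by simp only [hw, p0 x]
  have pg : Function.Periodic g L := fun x => by simp only [hg, p0 x]
  set D := ∫ x in (0:ℝ)..L, u2 x ^ 2 with hD
  have D0 : 0 ≤ D := intervalIntegral.integral_nonneg hL.le (fun x _ => sq_nonneg _)
  set N := ∫ x in (0:ℝ)..L, (w x * u1 x ^ 2) ^ 2 with hN
  have N0 : 0 ≤ N := intervalIntegral.integral_nonneg hL.le (fun x _ => sq_nonneg _)
  -- N identity
  have hN1 : N = 3 * e * ∫ x in (0:ℝ)..L, (w x * u1 x ^ 2) * u2 x := by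
    have h := per_int_zero L (fun x => w x * u1 x ^ 3 * e)
      (fun x => 3 * e * ((w x * u1 x ^ 2) * u2 x) - (w x * u1 x ^ 2) ^ 2)
      (fun x => by simp only [pw x, p1 x])
      (fun x => by
        have := ((dw x).mul ((d1 x).pow 3)).mul_const e
        refine HasDerivAt.congr_deriv this ?_
        simp; field_simp; ring) (by fun_prop)
    rw [intervalIntegral.integral_sub, intervalIntegral.integral_const_mul] at h
    · linarith
    all_goals exact Continuous.intervalIntegrable (by fun_prop) _ _
  have hcs1 := cs_aux 0 L hL.le (fun x => w x * u1 x ^ 2) u2 (by fun_prop) c2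
  have hN2 : N ≤ 9 * e ^ 2 * D := by
    rcases N0.eq_or_lt with h | h
    · rw [← h]; positivity
    · have : N * N ≤ N * (9 * e ^ 2 * D) := by
        have h3 : N * N = 9 * e ^ 2 * (∫ x in (0:ℝ)..L, (w x * u1 x ^ 2) * u2 x) ^ 2 := by
          rw [hN1]; ring
        rw [h3]
        have : 9 * e ^ 2 * (∫ x in (0:ℝ)..L, (w x * u1 x ^ 2) * u2 x) ^ 2
          ≤ 9 * e ^ 2 * (N * D) := mul_le_mul_of_nonneg_left hcs1 (by positivity)
        linarith
      exact le_of_mul_le_mul_left this h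
  set X := ∫ x in (0:ℝ)..L, (w x * u1 x ^ 2) * (w x * u2 x) with hX
  have hcs2 := cs_aux 0 L hL.le (fun x => w x * u1 x ^ 2) (fun x => w x * u2 x)
    (by fun_prop) (by fun_prop)
  have hwD : ∫ x in (0:ℝ)..L, (w x * u2 x) ^ 2 ≤ D := by
    apply intervalIntegral.integral_mono_on hL.le
    · exact Continuous.intervalIntegrable (by fun_prop) _ _
    · exact Continuous.intervalIntegrable (by fun_prop) _ _
    · intro x _
      rw [mul_pow]
      have := w0 x; have := w1 x
      have h1 : w x ^ 2 ≤ 1 := by nlinarith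
      nlinarith [sq_nonneg (u2 x)]
  have hX2 : X ≤ 3 * e * D := by
    refine le_sq_aux (by positivity) ?_
    calc X ^ 2 ≤ N * ∫ x in (0:ℝ)..L, (w x * u2 x) ^ 2 := hcs2
      _ ≤ (9 * e ^ 2 * D) * D := by
        apply mul_le_mul hN2 hwD _ (by positivity)
        exact intervalIntegral.integral_nonneg hL.le (fun x _ => sq_nonneg _)
      _ = _ := by ring
  have hid : (∫ x in (0:ℝ)..L, g x * u2 x ^ 2) = -(∫ x in (0:ℝ)..L, (g x * u3 x) * u1 x) + X := by
    have h := per_int_zero L (fun x => g x * u1 x * u2 x - u1 x ^ 3 / 3)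
      (fun x => g x * u2 x ^ 2 + (g x * u3 x) * u1 x - (w x * u1 x ^ 2) * (w x * u2 x))
      (fun x => by simp only [pg x, p1 x, p2 x])
      (fun x => by
        have := (((dg x).mul (d1 x)).mul (d2 x)).sub (((d1 x).pow 3).div_const 3)
        refine HasDerivAt.congr_deriv this ?_
        simp; ring) (by fun_prop)
    rw [intervalIntegral.integral_sub, intervalIntegral.integral_add] at h
    · linarith
    all_goals exact Continuous.intervalIntegrable (by fun_prop) _ _
  refine ⟨-(∫ x in (0:ℝ)..L, (g x * u3 x) * u1 x), ?_, ?_⟩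
  · rw [neg_sq]
    refine (cs_aux 0 L hL.le (fun x => g x * u3 x) u1 (by fun_prop) c1).trans ?_
    apply mul_le_mul_of_nonneg_right _
      (intervalIntegral.integral_nonneg hL.le (fun x _ => sq_nonneg _))
    apply intervalIntegral.integral_mono_on hL.le
    · exact Continuous.intervalIntegrable (by fun_prop) _ _
    · exact Continuous.intervalIntegrable (by fun_prop) _ _
    · intro x _
      rw [mul_pow]
      apply mul_le_mul_of_nonneg_right _ (sq_nonneg _)
      have := pos x
      simp only [hg]
      rw [div_pow, ← pow_mul]
      apply div_le_div_of_nonneg_left (by positivity) (by positivity)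
      nlinarith [mul_pos he this]
  · have h1 : ∫ x in (0:ℝ)..L, u x * u2 x ^ 2 ≤ ∫ x in (0:ℝ)..L, (g x * u2 x ^ 2 + e * u2 x ^ 2) := by
      apply intervalIntegral.integral_mono_on hL.le
      · exact Continuous.intervalIntegrable (by fun_prop) _ _
      · exact Continuous.intervalIntegrable (by fun_prop) _ _
      · intro x _
        rw [← add_mul]
        apply mul_le_mul_of_nonneg_right _ (sq_nonneg _)
        have := pos x
        have h2 : g x + e - u x = e ^ 2 / (e + u x) := by
          have := hne x
          simp only [hg]; field_simp; ring
        have : 0 ≤ e ^ 2 / (e + u x) := by positivity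
        linarith
    rw [intervalIntegral.integral_add, intervalIntegral.integral_const_mul, hid] at h1
    · linarith
    all_goals exact Continuous.intervalIntegrable (by fun_prop) _ _

/-- Lower bound of the weighted dissipation. -/
lemma part2 (L K : ℝ) (hL : 0 < L) (hK : 0 < K) (u u1 u2 : ℝ → ℝ)
    (c0 : Continuous u) (c1 : Continuous u1) (c2 : Continuous u2)
    (d0 : ∀ x, HasDerivAt u (u1 x) x) (d1 : ∀ x, HasDerivAt u1 (u2 x) x)
    (p0 : Function.Periodic u L) (p1 : Function.Periodic u1 L) (p2 : Function.Periodic u2 L)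
    (pos : ∀ x, 0 < u x) (hle : ∀ x, u x ≤ K) (m : ℝ) (hm : m * L = ∫ x in (0:ℝ)..L, u x) :
    m ^ 2 * (∫ x in (0:ℝ)..L, u1 x ^ 2) ≤ 4 * L ^ 2 * K * ∫ x in (0:ℝ)..L, u x * u2 x ^ 2 := by
  obtain ⟨x0, -, hx0⟩ := isCompact_Icc.exists_isMaxOn (Set.nonempty_Icc.2 hL.le) c0.continuousOn
    (s := Set.Icc 0 L)
  have hmax : ∀ x, u x ≤ u x0 := by
    intro x
    obtain ⟨y, hy, hxy⟩ := p0.exists_mem_Ico₀ hL x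
    rw [hxy]; exact hx0 ⟨hy.1, hy.2.le⟩
  have hu1 : u1 x0 = 0 := by
    have : IsLocalMax u x0 := Filter.Eventually.of_forall hmax
    exact this.hasDerivAt_eq_zero (d0 x0)
  have hmpos : 0 < m := by
    have : 0 < ∫ x in (0:ℝ)..L, u x :=
      intervalIntegral.intervalIntegral_pos_of_pos (c0.intervalIntegrable _ _) pos hL
    rw [← hm] at this
    exact pos_of_mul_pos_left this hL.le
  have hmu : m ≤ u x0 := by
    have : ∫ x in (0:ℝ)..L, u x ≤ ∫ x in (0:ℝ)..L, u x0 :=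
      intervalIntegral.integral_mono_on hL.le (c0.intervalIntegrable _ _) (by simp)
        (fun x _ => hmax x)
    rw [← hm] at this
    simp at this
    nlinarith
  have hmK : m ≤ K := hmu.trans (hle x0)
  set S := ∫ x in (0:ℝ)..L, u x * u2 x ^ 2 with hS
  have S0 : 0 ≤ S := intervalIntegral.integral_nonneg hL.le
    (fun x _ => mul_nonneg (pos x).le (sq_nonneg _))
  set P := ∫ x in (0:ℝ)..L, u1 x ^ 2 with hP
  have P0 : 0 ≤ P := intervalIntegral.integral_nonneg hL.le (fun x _ => sq_nonneg _)
  have hSx : S = ∫ x in x0..(x0 + L), u x * u2 x ^ 2 := by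
    have : Function.Periodic (fun x => u x * u2 x ^ 2) L := fun x => by simp only [p0 x, p2 x]
    have := this.intervalIntegral_add_eq 0 x0
    rw [zero_add] at this; exact this
  have hPx : P = ∫ x in x0..(x0 + L), u1 x ^ 2 := by
    have : Function.Periodic (fun x => u1 x ^ 2) L := fun x => by simp only [p1 x]
    have := this.intervalIntegral_add_eq 0 x0
    rw [zero_add] at this; exact this
  -- bound of u1 on an interval where u ≥ m/2
  have hB : ∀ z, x0 ≤ z → z ≤ x0 + L → (∀ x ∈ Set.Icc x0 z, m / 2 ≤ u x) →
      ∀ y ∈ Set.Icc x0 z, u1 y ^ 2 ≤ L * (2 * S / m) := by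
    intro z hz1 hz2 hz y hy
    have h1 : u1 y = ∫ x in x0..y, 1 * u2 x := by
      simp only [one_mul]
      rw [intervalIntegral.integral_eq_sub_of_hasDerivAt (fun x _ => d1 x)
        (c2.intervalIntegrable _ _), hu1, sub_zero]
    have h2 := cs_aux x0 y hy.1 (fun _ => 1) u2 continuous_const c2
    rw [← h1] at h2
    have h3 : ∫ x in x0..y, (1:ℝ) ^ 2 = y - x0 := by simp
    rw [h3] at h2
    have h4 : ∫ x in x0..y, u2 x ^ 2 ≤ ∫ x in x0..y, (2 / m) * (u x * u2 x ^ 2) := by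
      apply intervalIntegral.integral_mono_on hy.1
      · exact Continuous.intervalIntegrable (by fun_prop) _ _
      · exact Continuous.intervalIntegrable (by fun_prop) _ _
      · intro x hx
        have := hz x ⟨hx.1, hx.2.trans hy.2⟩
        have h5 : 1 ≤ 2 / m * u x := by
          rw [div_mul_eq_mul_div, le_div_iff₀ hmpos]; linarith
        nlinarith [sq_nonneg (u2 x)]
    have h6 : ∫ x in x0..y, u x * u2 x ^ 2 ≤ S := by
      rw [hSx]
      apply intervalIntegral.integral_mono_interval le_rfl hy.1 (hy.2.trans hz2)
      · exact Filter.Eventually.of_forall (fun x => mul_nonneg (pos x).le (sq_nonneg _))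
      · exact Continuous.intervalIntegrable (by fun_prop) _ _
    rw [intervalIntegral.integral_const_mul] at h4
    have h7 : ∫ x in x0..y, u2 x ^ 2 ≤ 2 * S / m := by
      refine h4.trans ?_
      rw [div_mul_eq_mul_div]
      gcongr
    refine h2.trans ?_
    apply mul_le_mul (by linarith [hy.2]) h7 _ hL.le
    exact intervalIntegral.integral_nonneg hy.1 (fun x _ => sq_nonneg _)
  by_cases hA : ∀ x ∈ Set.Icc x0 (x0 + L), m / 2 ≤ u x
  · have h1 := hB (x0 + L) (by linarith) le_rfl hA
    have h2 : P ≤ ∫ x in x0..(x0 + L), L * (2 * S / m) := by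
      rw [hPx]
      apply intervalIntegral.integral_mono_on (by linarith)
      · exact Continuous.intervalIntegrable (by fun_prop) _ _
      · simp
      · exact h1
    simp only [intervalIntegral.integral_const, add_sub_cancel_left, smul_eq_mul] at h2
    calc m ^ 2 * P ≤ m ^ 2 * (L * (L * (2 * S / m))) := by gcongr
      _ = 2 * L ^ 2 * m * S := by field_simp
      _ ≤ 2 * L ^ 2 * K * S := by gcongr
      _ ≤ 4 * L ^ 2 * K * S := by gcongr; norm_num
  · push Not at hA
    obtain ⟨x1, hx1, hux1⟩ := hA
    -- first point where u ≤ m/2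
    obtain ⟨z, hz, hzmin⟩ := (isCompact_Icc.inter_right
      (isClosed_le c0 continuous_const : IsClosed {x | u x ≤ m / 2})
      (s := Set.Icc x0 (x0 + L))).exists_isLeast ⟨x1, hx1, hux1.le⟩
    have hzu : u z ≤ m / 2 := hz.2
    have hzlt : ∀ x ∈ Set.Ico x0 z, m / 2 ≤ u x := by
      intro x hx
      by_contra hcon
      have : z ≤ x := hzmin ⟨⟨hx.1, hx.2.le.trans hz.1.2⟩, (not_le.1 hcon).le⟩
      linarith [hx.2]
    have hx0z : x0 < z := by
      rcases hz.1.1.eq_or_lt with h | h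
      · rw [← h] at hzu; linarith
      · exact h
    have hzle : ∀ x ∈ Set.Icc x0 z, m / 2 ≤ u x := by
      have hcl : IsClosed {x | m / 2 ≤ u x} := isClosed_le continuous_const c0
      have := hcl.closure_subset_iff.2 (fun x hx => hzlt x hx : Set.Ico x0 z ⊆ {x | m / 2 ≤ u x})
      rw [closure_Ico hx0z.ne] at this
      exact this
    have h1 := hB z hz.1.1 hz.1.2 hzle
    obtain ⟨y, hy, hyd⟩ := exists_hasDerivAt_eq_slope u u1 hx0z c0.continuousOn (fun x _ => d0 x)
    have h2 := h1 y ⟨hy.1.le, hy.2.le⟩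
    have hzx : 0 < z - x0 := by linarith
    have hzL : z - x0 ≤ L := by linarith [hz.1.2]
    have h3 : m / 2 ≤ (-u1 y) * L := by
      have h4 : u1 y * (z - x0) = u z - u x0 := by rw [hyd]; field_simp
      have h5 : u1 y ≤ 0 := by
        rw [hyd]; exact div_nonpos_of_nonpos_of_nonneg (by linarith) hzx.le
      nlinarith
    have h6 : m ^ 3 ≤ 8 * L ^ 3 * S := by
      have h7 : (m / 2) ^ 2 ≤ ((-u1 y) * L) ^ 2 := pow_le_pow_left₀ (by positivity) h3 2
      have h8 : ((-u1 y) * L) ^ 2 ≤ L * (2 * S / m) * L ^ 2 := by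
        rw [mul_pow, neg_sq]; gcongr
      have h9 : m * (m / 2) ^ 2 ≤ m * (L * (2 * S / m) * L ^ 2) := by gcongr; linarith
      have : m * (L * (2 * S / m) * L ^ 2) = 2 * L ^ 3 * S := by field_simp
      rw [this] at h9
      nlinarith
    have hPS : P ^ 2 ≤ m * L * S := by
      have hibp : P = -∫ x in (0:ℝ)..L, u x * u2 x := by
        have h := per_int_zero L (fun x => u x * u1 x) (fun x => u1 x ^ 2 + u x * u2 x)
          (fun x => by simp only [p0 x, p1 x])
          (fun x => by
            have := (d0 x).mul (d1 x)
            refine HasDerivAt.congr_deriv this ?_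
            ring) (by fun_prop)
        rw [intervalIntegral.integral_add] at h
        · linarith
        all_goals exact Continuous.intervalIntegrable (by fun_prop) _ _
      have hcs := cs_aux 0 L hL.le (fun x => √(u x)) (fun x => √(u x) * u2 x)
        (by fun_prop) (by fun_prop)
      have e1 : ∀ x, √(u x) * (√(u x) * u2 x) = u x * u2 x := fun x => by
        rw [← mul_assoc, Real.mul_self_sqrt (pos x).le]
      have e2 : ∀ x, √(u x) ^ 2 = u x := fun x => Real.sq_sqrt (pos x).le
      simp only [mul_pow, e1, e2] at hcs
      rw [hibp, neg_sq, hm]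
      exact hcs
    refine le_sq_aux (by positivity) ?_
    calc (m ^ 2 * P) ^ 2 = m ^ 4 * P ^ 2 := by ring
      _ ≤ m ^ 4 * (m * L * S) := by gcongr
      _ = m ^ 2 * (m ^ 3) * (L * S) := by ring
      _ ≤ K ^ 2 * (8 * L ^ 3 * S) * (L * S) := by gcongr
      _ ≤ (4 * L ^ 2 * K * S) ^ 2 := by
        have : 0 ≤ K ^ 2 * L ^ 4 * S ^ 2 := by positivity
        nlinarith

/-- Inequality (3.36) of the paper: for every `L > 0` there are `c₁, c₂ > 0` depending
only on `L` such that for all `ε ∈ (0,1]`, `K > 0`, and strictly positive `L`-periodic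
`u ∈ C³(ℝ)` bounded by `K`, with `ū = (1/L)∫₀ᴸ u`, `a = ū²/√(ε+K²)`,
`J = (1/2)∫₀ᴸ (u')²`, `I = ∫₀ᴸ f_ε(u)(u''')²`, `D = ∫₀ᴸ (u'')²`, one has
`c₁ a² J ≤ I + c₂ √ε a D`. -/
theorem stmt_7 (L : ℝ) (hL : 0 < L) :
    ∃ c₁ c₂ : ℝ, 0 < c₁ ∧ 0 < c₂ ∧
      ∀ (ε K : ℝ), ε ∈ Set.Ioc (0 : ℝ) 1 → 0 < K →
        ∀ u : ℝ → ℝ, ContDiff ℝ 3 u → Function.Periodic u L →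
          (∀ x, 0 < u x) → (∀ x, u x ≤ K) →
          c₁ * ((((1 / L) * ∫ x in (0:ℝ)..L, u x) ^ 2 / Real.sqrt (ε + K ^ 2)) ^ 2) *
              ((1 / 2) * ∫ x in (0:ℝ)..L, (deriv u x) ^ 2) ≤
            (∫ x in (0:ℝ)..L, (u x ^ 4 / (ε + u x ^ 2)) * (deriv^[3] u x) ^ 2) +
              c₂ * Real.sqrt ε *
                (((1 / L) * ∫ x in (0:ℝ)..L, u x) ^ 2 / Real.sqrt (ε + K ^ 2)) *
                ∫ x in (0:ℝ)..L, (deriv^[2] u x) ^ 2 := by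
  refine ⟨1 / (8 * L ^ 4), 2 / L ^ 2, by positivity, by positivity, ?_⟩
  intro ε K hε hK u hu hp pos hle
  have hε0 : 0 < ε := hε.1
  have hu' : ContDiff ℝ (2 + 1) u := by norm_num; exact hu
  have hcd1 : ContDiff ℝ 2 (deriv u) := (contDiff_succ_iff_deriv.1 hu').2.2
  have hcd1' : ContDiff ℝ (1 + 1) (deriv u) := by norm_num; exact hcd1
  have hcd2 : ContDiff ℝ 1 (deriv (deriv u)) := (contDiff_succ_iff_deriv.1 hcd1').2.2
  have c3 : Continuous (deriv (deriv (deriv u))) := hcd2.continuous_deriv le_rfl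
  have d0 : ∀ x, HasDerivAt u (deriv u x) x :=
    fun x => (hu.differentiable (by norm_num) x).hasDerivAt
  have d1 : ∀ x, HasDerivAt (deriv u) (deriv (deriv u) x) x :=
    fun x => (hcd1.differentiable (by norm_num) x).hasDerivAt
  have d2 : ∀ x, HasDerivAt (deriv (deriv u)) (deriv (deriv (deriv u)) x) x :=
    fun x => (hcd2.differentiable (by norm_num) x).hasDerivAt
  have pd : ∀ f : ℝ → ℝ, Function.Periodic f L → Function.Periodic (deriv f) L := by
    intro f hf x
    rw [← deriv_comp_add_const]
    congr 1
    ext y; exact hf y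
  have p1 := pd u hp
  have p2 := pd _ p1
  have e3 : deriv^[3] u = deriv (deriv (deriv u)) := rfl
  have e2 : deriv^[2] u = deriv (deriv u) := rfl
  rw [e3, e2]
  set m := (1 / L) * ∫ x in (0:ℝ)..L, u x with hm
  have hmL : m * L = ∫ x in (0:ℝ)..L, u x := by rw [hm]; field_simp
  have he : 0 < √ε := Real.sqrt_pos.2 hε0
  obtain ⟨T, hT, hST⟩ := part1 L (√ε) hL he u _ _ _ hu.continuous hcd1.continuous hcd2.continuous c3
    d0 d1 d2 hp p1 p2 pos
  have h2 := part2 L K hL hK u _ _ hu.continuous hcd1.continuous hcd2.continuous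
    d0 d1 hp p1 p2 pos hle m hmL
  rw [Real.sq_sqrt hε0.le] at hT
  set I := ∫ x in (0:ℝ)..L, (u x ^ 4 / (ε + u x ^ 2)) * (deriv (deriv (deriv u)) x) ^ 2
  set P := ∫ x in (0:ℝ)..L, (deriv u x) ^ 2
  set D := ∫ x in (0:ℝ)..L, (deriv (deriv u) x) ^ 2
  set S := ∫ x in (0:ℝ)..L, u x * (deriv (deriv u) x) ^ 2
  have P0 : 0 ≤ P := intervalIntegral.integral_nonneg hL.le (fun x _ => sq_nonneg _)
  have I0 : 0 ≤ I := intervalIntegral.integral_nonneg hL.le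
    (fun x _ => by have := pos x; positivity)
  have hKs : K ≤ √(ε + K ^ 2) := Real.le_sqrt_of_sq_le (by linarith)
  set a := m ^ 2 / √(ε + K ^ 2) with ha
  have a0 : 0 ≤ a := by positivity
  have haK : a ≤ m ^ 2 / K := by rw [ha]; gcongr
  have haP : a * P ≤ 4 * L ^ 2 * S := by
    calc a * P ≤ m ^ 2 / K * P := by gcongr
      _ = m ^ 2 * P / K := by ring
      _ ≤ 4 * L ^ 2 * K * S / K := by gcongr
      _ = 4 * L ^ 2 * S := by field_simp
  have haP2 : a ^ 2 * P ≤ 4 * L ^ 2 * (a * T) + 16 * L ^ 2 * (√ε * a * D) := by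
    calc a ^ 2 * P = a * (a * P) := by ring
      _ ≤ a * (4 * L ^ 2 * (T + 4 * √ε * D)) := 
        mul_le_mul_of_nonneg_left (haP.trans (by gcongr)) a0
      _ = _ := by ring
  have hyoung : 4 * L ^ 2 * (a * T) ≤ a ^ 2 * P / 2 + 8 * L ^ 4 * I := by
    refine le_sq_aux (by positivity) ?_
    calc (4 * L ^ 2 * (a * T)) ^ 2 = 16 * L ^ 4 * a ^ 2 * T ^ 2 := by ring
      _ ≤ 16 * L ^ 4 * a ^ 2 * (I * P) := by gcongr
      _ ≤ _ := by nlinarith [sq_nonneg (a ^ 2 * P / 2 - 8 * L ^ 4 * I)]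
  have hfin : a ^ 2 * P ≤ 16 * L ^ 4 * I + 32 * L ^ 2 * (√ε * a * D) := by linarith
  calc 1 / (8 * L ^ 4) * a ^ 2 * (1 / 2 * P) = (a ^ 2 * P) / (16 * L ^ 4) := by field_simp; ring
    _ ≤ (16 * L ^ 4 * I + 32 * L ^ 2 * (√ε * a * D)) / (16 * L ^ 4) := by gcongr
    _ = I + 2 / L ^ 2 * √ε * a * D := by field_simp; ring
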